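/- Let X, Y be Banach spaces, D ⊂ X open and convex, F : D → Y twice continuously Fréchet differentiable, and x₀ ∈ D with F'(x₀) invertible. Let h : [0,t*) → ℝ be twice continuously differentiable satisfying assumptions (A1)–(A3) and be a majorizing function to F at x₀. Let (t_k) be the majorizing sequence: t_0 = 0, t_{k+1} = t_k − (1/(1 − L_h(t_k)))·(h(t_k)/h'(t_k)) with L_h(t) = h(t)h''(t)/(2h'(t)²). Let (x_k) be the sequence generated by Halley's method with starting point x₀: x_{k+1} = x_k − [I − L_F(x_k)]⁻¹F'(x_k)⁻¹F(x_k), where L_F(x) = ½F'(x)⁻¹F''(x)F'(x)⁻¹F(x). Then for all k ≥ 0: (i) F'(x_k) is invertible and ‖F'(x_k)⁻¹F'(x₀)‖ ≤ −1/h'(‖x_k − x₀‖) ≤ −1/h'(t_k); (ii) ‖F'(x₀)⁻¹F''(x_k)‖ ≤ h''(t_k); (iii) ‖F'(x₀)⁻¹F(x_k)‖ ≤ h(t_k); (iv) I − L_F(x_k) is invertible and ‖[I − L_F(x_k)]⁻¹‖ ≤ 1/(1 − L_h(t_k)); (v) ‖x_{k+1} − x_k‖ ≤ t_{k+1} − t_k.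 -/

import Mathlib

open Metric Set

/-!
Preconditioning by `F'(x₀)⁻¹` leaves Halley's method unchanged and reduces everything to a map `G`
with `G'(x₀) = I`. At a Halley step `d = -(I - L)⁻¹ A⁻¹ y` from a point where `G` has value `y`,
derivative `A` and second derivative `B`, the quadratic Taylor model `y + A d + ½ B d d` equals
`½ B (L d) d`; for the scalar step `s` of the majorant `h` at `τ` the model of `h` equals
`½ h''(τ) L_h(τ) s²`. Hence `‖y‖ ≤ h(τ)`, `‖A⁻¹‖ ≤ -1/h'(τ)` and `‖B‖ ≤ h''(τ)` give `‖d‖ ≤ s` and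
bound the first model by the second. The third order Taylor remainders compare in the same way, by
integrating the majorant condition twice, where convexity of `h''` allows one to replace `‖x - x₀‖`
by `τ`. Adding up, `‖G(x + d)‖ ≤ h(τ + s)`, which closes the induction.

The scalar iteration stays in `[0, t*]` because `h''` is nondecreasing: the quadratic Taylor model
of `h` at `τ ≤ t*` lies below `h` and so is nonpositive at `t*`, which forces `L_h(τ) < 1` and
`s ≤ t* - τ`.
-/

section Increments

theorem map_add_sub_map_le_of_convexOn {𝕜 : Type*} [Field 𝕜] [LinearOrder 𝕜]
    [IsStrictOrderedRing 𝕜] {s : Set 𝕜} {g : 𝕜 → 𝕜} (hg : ConvexOn 𝕜 s g) {r t δ : 𝕜}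
    (hr : r ∈ s) (htδ : t + δ ∈ s) (hrt : r ≤ t) (hδ : 0 ≤ δ) :
    g (r + δ) - g r ≤ g (t + δ) - g t := by
  rcases hδ.eq_or_lt with rfl | hδ
  · simp
  rcases hrt.eq_or_lt with rfl | hrt
  · rfl
  have mem_of_mem_Icc {u : 𝕜} (hu : u ∈ Icc r (t + δ)) : u ∈ s := hg.1.ordConnected.out hr htδ hu
  have hleft := hg.secant_mono hr (mem_of_mem_Icc (u := r + δ) ⟨by linarith, by linarith⟩) htδ
    (by linarith) (by linarith) (by linarith)
  have hright := hg.secant_mono htδ hr (mem_of_mem_Icc (u := t) ⟨hrt.le, by linarith⟩)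
    (by linarith) (by linarith) hrt.le
  have hslope : (g (r + δ) - g r) / δ ≤ (g (t + δ) - g t) / δ :=
    calc (g (r + δ) - g r) / δ = (g (r + δ) - g r) / (r + δ - r) := by rw [add_sub_cancel_left]
      _ ≤ (g (t + δ) - g r) / (t + δ - r) := hleft
      _ = (g r - g (t + δ)) / (r - (t + δ)) := by rw [← neg_sub, ← neg_sub r, neg_div_neg_eq]
      _ ≤ (g t - g (t + δ)) / (t - (t + δ)) := hright
      _ = (g (t + δ) - g t) / δ := by
        rw [← neg_sub, ← neg_sub (t + δ) t, neg_div_neg_eq, add_sub_cancel_left]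
  exact (div_le_div_iff_of_pos_right hδ).1 hslope

variable {E : Type*} [NormedAddCommGroup E] [NormedSpace ℝ E]

theorem norm_sub_le_sub_of_norm_deriv_le {f f' : ℝ → E} {B B' : ℝ → ℝ} {a b : ℝ}
    (hf : ∀ u ∈ Icc a b, HasDerivWithinAt f (f' u) (Icc a b) u)
    (hB : ∀ u ∈ Icc a b, HasDerivWithinAt B (B' u) (Icc a b) u)
    (bound : ∀ u ∈ Ico a b, ‖f' u‖ ≤ B' u) {u : ℝ} (hu : u ∈ Icc a b) :
    ‖f u - f a‖ ≤ B u - B a := by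
  have hnhds {v : ℝ} (hv : v ∈ Ico a b) : Icc a b ∈ nhdsWithin v (Ici v) :=
    Filter.mem_of_superset (Icc_mem_nhdsGE hv.2) (Icc_subset_Icc_left hv.1)
  have hf_sub (v : ℝ) (hv : v ∈ Icc a b) := (hf v hv).sub_const (f a)
  have hB_sub (v : ℝ) (hv : v ∈ Icc a b) := (hB v hv).sub_const (B a)
  refine image_norm_le_of_norm_deriv_right_le_deriv_boundary'
    (f := fun v => f v - f a) (B := fun v => B v - B a)
    (fun v hv => (hf_sub v hv).continuousWithinAt)
    (fun v hv => (hf_sub v (Ico_subset_Icc_self hv)).mono_of_mem_nhdsWithin (hnhds hv)) (by simp)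
    (fun v hv => (hB_sub v hv).continuousWithinAt)
    (fun v hv => (hB_sub v (Ico_subset_Icc_self hv)).mono_of_mem_nhdsWithin (hnhds hv)) bound hu

theorem hasDerivWithinAt_sub_linear {f : ℝ → E} {v w : E} {s : Set ℝ} {a u : ℝ}
    (hf : HasDerivWithinAt f v s u) :
    HasDerivWithinAt (fun u => f u - (u - a) • w) (v - w) s u := by
  simpa only [one_smul] using
    hf.fun_sub ((((hasDerivAt_id' u).sub_const a).smul_const w).hasDerivWithinAt)

theorem hasDerivWithinAt_sub_quadratic {f : ℝ → E} {v w z : E} {s : Set ℝ} {a u : ℝ}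
    (hf : HasDerivWithinAt f v s u) :
    HasDerivWithinAt (fun u => f u - (u - a) • w - ((u - a) ^ 2 / 2) • z)
      (v - w - (u - a) • z) s u := by
  have hsq : HasDerivAt (fun u : ℝ => (u - a) ^ 2 / 2) (u - a) u := by
    simpa using (((hasDerivAt_id u).sub_const a).pow 2).div_const 2
  exact (hasDerivWithinAt_sub_linear hf).fun_sub (hsq.smul_const z).hasDerivWithinAt

theorem norm_taylor_two_le {f f' f'' : ℝ → E} {B B' B'' : ℝ → ℝ} {a b : ℝ}
    (hf : ∀ u ∈ Icc a b, HasDerivWithinAt f (f' u) (Icc a b) u)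
    (hf' : ∀ u ∈ Icc a b, HasDerivWithinAt f' (f'' u) (Icc a b) u)
    (hB : ∀ u ∈ Icc a b, HasDerivWithinAt B (B' u) (Icc a b) u)
    (hB' : ∀ u ∈ Icc a b, HasDerivWithinAt B' (B'' u) (Icc a b) u)
    (bound : ∀ u ∈ Icc a b, ‖f'' u - f'' a‖ ≤ B'' u - B'' a) {u : ℝ} (hu : u ∈ Icc a b) :
    ‖f u - f a - (u - a) • f' a - ((u - a) ^ 2 / 2) • f'' a‖ ≤
      B u - B a - (u - a) * B' a - (u - a) ^ 2 / 2 * B'' a := by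
  have hfirst (v : ℝ) (hv : v ∈ Icc a b) :
      ‖f' v - f' a - (v - a) • f'' a‖ ≤ B' v - B' a - (v - a) * B'' a := by
    have := norm_sub_le_sub_of_norm_deriv_le
      (fun u hu => hasDerivWithinAt_sub_linear (a := a) (w := f'' a) (hf' u hu))
      (fun u hu => hasDerivWithinAt_sub_linear (a := a) (w := B'' a) (hB' u hu))
      (fun u hu => bound u (Ico_subset_Icc_self hu)) hv
    simpa [sub_right_comm] using this
  have := norm_sub_le_sub_of_norm_deriv_le
    (fun u hu => hasDerivWithinAt_sub_quadratic (a := a) (w := f' a) (z := f'' a) (hf u hu))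
    (fun u hu => hasDerivWithinAt_sub_quadratic (a := a) (w := B' a) (z := B'' a) (hB u hu))
    (fun u hu => hfirst u (Ico_subset_Icc_self hu)) hu
  simpa [sub_right_comm] using this

theorem hasDerivAt_comp_add_smul {𝕜 X E : Type*} [NontriviallyNormedField 𝕜]
    [NormedAddCommGroup X] [NormedSpace 𝕜 X] [NormedAddCommGroup E] [NormedSpace 𝕜 E]
    {G : X → E} {A : X →L[𝕜] E} {x d : X} {u : 𝕜} (hG : HasFDerivAt G A (x + u • d)) :
    HasDerivAt (fun u : 𝕜 => G (x + u • d)) (A d) u := by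
  have hline : HasDerivAt (fun u : 𝕜 => x + u • d) d u := by
    simpa only [one_smul] using ((hasDerivAt_id' u).smul_const d).const_add x
  exact hG.comp_hasDerivAt u hline

end Increments

section Neumann

theorem norm_ringInverse_le_of_norm_one_sub_le {A : Type*} [NormedRing A]
    [HasSummableGeomSeries A] (hone : ‖(1 : A)‖ ≤ 1) {a : A} {q : ℝ} (hq : q < 1)
    (ha : ‖1 - a‖ ≤ q) : ‖Ring.inverse a‖ ≤ 1 / (1 - q) := by
  have hlt : ‖1 - a‖ < 1 := ha.trans_lt hq
  have hinv : Ring.inverse a = ∑' n : ℕ, (1 - a) ^ n := by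
    conv_lhs => rw [← sub_sub_cancel 1 a, NormedRing.inverse_one_sub _ hlt]
    rfl
  calc ‖Ring.inverse a‖ ≤ ‖(1 : A)‖ - 1 + (1 - ‖1 - a‖)⁻¹ :=
        hinv ▸ tsum_geometric_le_of_norm_lt_one _ hlt
    _ ≤ (1 - ‖1 - a‖)⁻¹ := by linarith
    _ ≤ 1 / (1 - q) := by
        rw [← one_div]
        exact one_div_le_one_div_of_le (by linarith) (by linarith)

variable {𝕜 X : Type*} [NontriviallyNormedField 𝕜] [NormedAddCommGroup X] [NormedSpace 𝕜 X]
  [CompleteSpace X] {A : X →L[𝕜] X} {q : ℝ}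

theorem isInvertible_of_norm_id_sub_lt_one (hA : ‖.id 𝕜 X - A‖ < 1) : A.IsInvertible :=
  ⟨ContinuousLinearEquiv.unitsEquiv 𝕜 X (Units.oneSub (1 - A) hA), sub_sub_cancel 1 A⟩

theorem norm_inverse_le_of_norm_id_sub_le (hq : q < 1) (hA : ‖.id 𝕜 X - A‖ ≤ q) :
    ‖A.inverse‖ ≤ 1 / (1 - q) := by
  rw [← ContinuousLinearMap.ringInverse_eq_inverse]
  exact norm_ringInverse_le_of_norm_one_sub_le ContinuousLinearMap.norm_id_le hq hA

end Neumann

section ScalarHalley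

/-- The scalar Halley auxiliary quantity `L_h(t) = h(t) h''(t) / (2 h'(t)²)`, as a function of the
value `a`, the derivative `b` and the second derivative `c` of `h` at `t`. -/
noncomputable def halleyAux (a b c : ℝ) : ℝ :=
  a * c / (2 * b ^ 2)

/-- The increment `t_{k+1} - t_k` of the scalar Halley iteration, as a function of the value `a`,
the derivative `b` and the second derivative `c` of `h` at `t_k`. -/
noncomputable def halleyIncr (a b c : ℝ) : ℝ :=
  -(1 / (1 - halleyAux a b c) * (a / b))

theorem halleyAux_lt_one {a b c σ : ℝ} (hb : b < 0) (hc : 0 ≤ c)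
    (hσ : a + b * σ + c / 2 * σ ^ 2 ≤ 0) : halleyAux a b c < 1 := by
  have hb2 : 0 < b ^ 2 := sq_pos_of_neg hb
  have hdiscr : 2 * (a * c) ≤ b ^ 2 := by
    linarith [mul_nonpos_of_nonneg_of_nonpos hc hσ, sq_nonneg (b + c * σ)]
  rw [halleyAux, div_lt_one (by linarith)]
  linarith

theorem halleyIncr_nonneg {a b c : ℝ} (ha : 0 ≤ a) (hb : b < 0) (hL : halleyAux a b c < 1) :
    0 ≤ halleyIncr a b c :=
  neg_nonneg.2 <| mul_nonpos_of_nonneg_of_nonpos (one_div_nonneg.2 (sub_nonneg.2 hL.le))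
    (div_nonpos_of_nonneg_of_nonpos ha hb.le)

theorem halleyIncr_le {a b c σ : ℝ} (hb : b < 0) (hc : 0 ≤ c) (hσ0 : 0 ≤ σ)
    (hσ : a + b * σ + c / 2 * σ ^ 2 ≤ 0) : halleyIncr a b c ≤ σ := by
  have hL : 0 < 1 - halleyAux a b c := sub_pos.2 (halleyAux_lt_one hb hc hσ)
  have hnewton : -(a / b) ≤ σ := by
    rw [← div_neg, div_le_iff₀ (neg_pos.2 hb)]
    linarith [mul_nonneg hc (sq_nonneg σ)]
  have hscaled : ((1 - halleyAux a b c) * σ - -(a / b)) * -b =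
      -(a + b * σ + c / 2 * σ ^ 2) + c / 2 * σ * (σ - -(a / b)) := by
    have := hb.ne
    rw [halleyAux]
    field_simp
    ring
  have hle : -(a / b) ≤ (1 - halleyAux a b c) * σ := by
    refine sub_nonneg.1 (nonneg_of_mul_nonneg_left ?_ (neg_pos.2 hb))
    rw [hscaled]
    have := mul_nonneg (mul_nonneg hc hσ0) (sub_nonneg.2 hnewton)
    linarith
  rwa [halleyIncr, ← mul_neg, one_div_mul_eq_div, div_le_iff₀' hL]

theorem quadratic_halleyIncr {a b c : ℝ} (hb : b ≠ 0) (hL : halleyAux a b c ≠ 1) :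
    a + b * halleyIncr a b c + c / 2 * halleyIncr a b c ^ 2 =
      c / 2 * halleyAux a b c * halleyIncr a b c ^ 2 := by
  have hsub : 1 - halleyAux a b c ≠ 0 := sub_ne_zero.2 hL.symm
  have hincr : (1 - halleyAux a b c) * halleyIncr a b c = -(a / b) := by
    rw [halleyIncr]
    field_simp
  have haux : a / b * c = 2 * b * halleyAux a b c := by
    rw [halleyAux]
    field_simp
  have hab : b * (a / b) = a := by field_simp
  linear_combination (b + c / 2 * halleyIncr a b c) * hincr - hab - halleyIncr a b c / 2 * haux

end ScalarHalley

section HalleyOperator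

variable {𝕜 X Y : Type*} [NontriviallyNormedField 𝕜] [NormedAddCommGroup X] [NormedSpace 𝕜 X]
  [NormedAddCommGroup Y] [NormedSpace 𝕜 Y]

/-- The Halley operator `L = ½ A⁻¹ B(A⁻¹ y)` of a map with value `y`, derivative `A` and second
derivative `B` at some point. It is meaningful only for invertible `A`, since `A.inverse = 0`
otherwise. -/
noncomputable def halleyOperator (A : X →L[𝕜] Y) (B : X →L[𝕜] X →L[𝕜] Y)
    (y : Y) : X →L[𝕜] X :=
  (2⁻¹ : 𝕜) • A.inverse ∘L B (A.inverse y)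

/-- The Halley correction `-(I - L)⁻¹ A⁻¹ y`, with `L` the Halley operator of `(A, B, y)`. -/
noncomputable def halleyCorrection (A : X →L[𝕜] Y) (B : X →L[𝕜] X →L[𝕜] Y)
    (y : Y) : X :=
  -(.id 𝕜 X - halleyOperator A B y).inverse (A.inverse y)

/-- One step of Halley's method for a map `G` with derivative `G'` and second derivative `G''`. -/
noncomputable def halleyMap (G : X → Y) (G' : X → X →L[𝕜] Y) (G'' : X → X →L[𝕜] X →L[𝕜] Y)
    (x : X) : X :=
  x + halleyCorrection (G' x) (G'' x) (G x)

theorem quadratic_halleyCorrection {A : X →L[𝕜] Y} {B : X →L[𝕜] X →L[𝕜] Y} {y : Y}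
    (hA : A.IsInvertible)
    (hL : (.id 𝕜 X - halleyOperator A B y).IsInvertible) :
    y + A (halleyCorrection A B y) +
        (2⁻¹ : 𝕜) • B (halleyCorrection A B y) (halleyCorrection A B y) =
      (2⁻¹ : 𝕜) • B (halleyOperator A B y (halleyCorrection A B y)) (halleyCorrection A B y) := by
  set d := halleyCorrection A B y with hd
  have hfixed : halleyOperator A B y d = A.inverse y + d := by
    have : (.id 𝕜 X - halleyOperator A B y) d = -A.inverse y := by
      rw [hd, halleyCorrection, map_neg, hL.self_apply_inverse]
    rw [sub_apply, ContinuousLinearMap.id_apply] at this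
    exact (eq_neg_add_iff_add_eq.1 (sub_eq_iff_eq_add.1 this)).symm
  have hlinear : y + A d = (2⁻¹ : 𝕜) • B (A.inverse y) d := by
    calc y + A d = A (halleyOperator A B y d) := by
          rw [hfixed, map_add, hA.self_apply_inverse]
      _ = (2⁻¹ : 𝕜) • B (A.inverse y) d := by
          simp [halleyOperator, hA.self_apply_inverse]
  rw [hlinear, hfixed, map_add, add_apply, smul_add]

end HalleyOperator

section HalleyEstimates

variable {𝕜 X Y : Type*} [RCLike 𝕜] [NormedAddCommGroup X] [NormedSpace 𝕜 X]
  [NormedAddCommGroup Y] [NormedSpace 𝕜 Y] {A : X →L[𝕜] Y} {B : X →L[𝕜] X →L[𝕜] Y} {y : Y}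
  {a b c : ℝ}

theorem norm_halleyOperator_le (hA : ‖A.inverse‖ ≤ -1 / b) (hB : ‖B‖ ≤ c)
    (hy : ‖y‖ ≤ a) : ‖halleyOperator A B y‖ ≤ halleyAux a b c := by
  have hb : 0 ≤ -1 / b := (norm_nonneg _).trans hA
  have hBy : ‖B (A.inverse y)‖ ≤ c * (-1 / b * a) :=
    B.le_of_opNorm_le_of_le hB (A.inverse.le_of_opNorm_le_of_le hA hy)
  calc ‖halleyOperator A B y‖ = 2⁻¹ * ‖A.inverse ∘L B (A.inverse y)‖ := by
        rw [halleyOperator, norm_smul, norm_inv, RCLike.norm_ofNat]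
    _ ≤ 2⁻¹ * (‖A.inverse‖ * ‖B (A.inverse y)‖) := by
        gcongr
        exact ContinuousLinearMap.opNorm_comp_le _ _
    _ ≤ 2⁻¹ * (-1 / b * (c * (-1 / b * a))) := by gcongr
    _ = halleyAux a b c := by
        rw [halleyAux]
        ring

variable [CompleteSpace X]

theorem isInvertible_id_sub_halleyOperator (hA : ‖A.inverse‖ ≤ -1 / b) (hB : ‖B‖ ≤ c)
    (hy : ‖y‖ ≤ a) (hL : halleyAux a b c < 1) :
    (.id 𝕜 X - halleyOperator A B y).IsInvertible :=
  isInvertible_of_norm_id_sub_lt_one <| by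
    rw [sub_sub_cancel]
    exact (norm_halleyOperator_le hA hB hy).trans_lt hL

theorem norm_inverse_id_sub_halleyOperator_le (hA : ‖A.inverse‖ ≤ -1 / b) (hB : ‖B‖ ≤ c)
    (hy : ‖y‖ ≤ a) (hL : halleyAux a b c < 1) :
    ‖(.id 𝕜 X - halleyOperator A B y).inverse‖ ≤ 1 / (1 - halleyAux a b c) :=
  norm_inverse_le_of_norm_id_sub_le hL <| by
    rw [sub_sub_cancel]
    exact norm_halleyOperator_le hA hB hy

theorem norm_halleyCorrection_le (hA : ‖A.inverse‖ ≤ -1 / b) (hB : ‖B‖ ≤ c)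
    (hy : ‖y‖ ≤ a) (hL : halleyAux a b c < 1) :
    ‖halleyCorrection A B y‖ ≤ halleyIncr a b c := by
  calc ‖halleyCorrection A B y‖
      = ‖(.id 𝕜 X - halleyOperator A B y).inverse (A.inverse y)‖ := by
        rw [halleyCorrection, norm_neg]
    _ ≤ 1 / (1 - halleyAux a b c) * (-1 / b * a) :=
        ContinuousLinearMap.le_of_opNorm_le_of_le _
          (norm_inverse_id_sub_halleyOperator_le hA hB hy hL)
          (A.inverse.le_of_opNorm_le_of_le hA hy)
    _ = halleyIncr a b c := by
        rw [halleyIncr]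
        ring

theorem norm_quadratic_halleyCorrection_le (hAinv : A.IsInvertible) (hb : b ≠ 0)
    (hA : ‖A.inverse‖ ≤ -1 / b) (hB : ‖B‖ ≤ c) (hy : ‖y‖ ≤ a) (hL : halleyAux a b c < 1) :
    ‖y + A (halleyCorrection A B y) +
        (2⁻¹ : 𝕜) • B (halleyCorrection A B y) (halleyCorrection A B y)‖ ≤
      a + b * halleyIncr a b c + c / 2 * halleyIncr a b c ^ 2 := by
  have hop := norm_halleyOperator_le hA hB hy
  have hd := norm_halleyCorrection_le hA hB hy hL
  have hLinv := isInvertible_id_sub_halleyOperator hA hB hy hL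
  rw [quadratic_halleyCorrection hAinv hLinv, quadratic_halleyIncr hb hL.ne, norm_smul, norm_inv,
    RCLike.norm_ofNat]
  set d := halleyCorrection A B y
  calc 2⁻¹ * ‖B (halleyOperator A B y d) d‖
      ≤ 2⁻¹ * (c * (halleyAux a b c * halleyIncr a b c) * halleyIncr a b c) := by
        gcongr
        exact B.le_of_opNorm₂_le_of_le hB
          ((halleyOperator A B y).le_of_opNorm_le_of_le hop hd) hd
    _ = c / 2 * halleyAux a b c * halleyIncr a b c ^ 2 := by ring

end HalleyEstimates

section Majorants

/-- `h` is twice differentiable on `[0, R)`, with derivatives `h'` and `h''` of which the second is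
convex and nondecreasing. Derivatives are taken within `[0, R)`, hence one-sided at `0`. -/
structure IsConvexMajorant (h h' h'' : ℝ → ℝ) (R : ℝ) : Prop where
  hasDerivWithinAt : ∀ s ∈ Ico 0 R, HasDerivWithinAt h (h' s) (Ico 0 R) s
  hasDerivWithinAt' : ∀ s ∈ Ico 0 R, HasDerivWithinAt h' (h'' s) (Ico 0 R) s
  convexOn : ConvexOn ℝ (Ico 0 R) h''
  monotoneOn : MonotoneOn h'' (Ico 0 R)

/-- A convex majorant satisfying the normalization and zero conditions under which the scalar
Halley iteration from `0` stays in `[0, tstar]`. Here `tstar` is the smallest zero of `h`, since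
`h'` is nondecreasing and negative at `tstar`. -/
structure IsHalleyMajorant (h h' h'' : ℝ → ℝ) (R tstar : ℝ) : Prop
    extends IsConvexMajorant h h' h'' R where
  deriv_zero : h' 0 = -1
  deriv_two_zero_nonneg : 0 ≤ h'' 0
  tstar_mem : tstar ∈ Ico 0 R
  deriv_tstar_neg : h' tstar < 0
  apply_tstar : h tstar = 0

/-- `h` majorizes `G` at `x₀`: the map `G` has first and second derivatives `G'` and `G''` on the
ball of radius `R` about `x₀`, and the size of `G` and `G''` at `x₀` and the variation of `G''` are
controlled by `h` and its second derivative `h''`. The majorizing condition of the paper for `F`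
is this one for the preconditioned map `G = F'(x₀)⁻¹ ∘ F`. -/
structure IsMajorizedAt {X Y : Type*} [NormedAddCommGroup X] [NormedSpace ℝ X]
    [NormedAddCommGroup Y] [NormedSpace ℝ Y] (G : X → Y) (G' : X → X →L[ℝ] Y)
    (G'' : X → X →L[ℝ] X →L[ℝ] Y) (x₀ : X) (R : ℝ) (h h'' : ℝ → ℝ) : Prop where
  hasFDerivAt : ∀ x ∈ ball x₀ R, HasFDerivAt G (G' x) x
  hasFDerivAt' : ∀ x ∈ ball x₀ R, HasFDerivAt G' (G'' x) x
  norm_le : ‖G x₀‖ ≤ h 0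
  norm_deriv_two_le : ‖G'' x₀‖ ≤ h'' 0
  norm_deriv_two_sub_le : ∀ x ∈ ball x₀ R, ∀ y ∈ ball x₀ R, ‖y - x‖ + ‖x - x₀‖ < R →
    ‖G'' y - G'' x‖ ≤ h'' (‖y - x‖ + ‖x - x₀‖) - h'' ‖x - x₀‖

theorem add_mul_mem_Ico {τ s R u : ℝ} (hτ : 0 ≤ τ) (hs : 0 ≤ s) (hR : τ + s < R)
    (hu : u ∈ Icc (0 : ℝ) 1) : τ + u * s ∈ Ico 0 R :=
  ⟨add_nonneg hτ (mul_nonneg hu.1 hs), by linarith [mul_le_of_le_one_left hs hu.2]⟩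

theorem hasDerivWithinAt_comp_add_mul {g : ℝ → ℝ} {v τ s R u : ℝ} (hτ : 0 ≤ τ) (hs : 0 ≤ s)
    (hR : τ + s < R) (hg : HasDerivWithinAt g v (Ico 0 R) (τ + u * s)) :
    HasDerivWithinAt (fun u => g (τ + u * s)) (v * s) (Icc 0 1) u := by
  have hline : HasDerivWithinAt (fun u => τ + u * s) s (Icc 0 1) u := by
    simpa using (((hasDerivAt_id' u).mul_const s).const_add τ).hasDerivWithinAt
  exact HasDerivWithinAt.comp u hg hline fun _ => add_mul_mem_Ico hτ hs hR

namespace IsHalleyMajorant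

variable {h h' h'' : ℝ → ℝ} {R tstar τ : ℝ}

theorem mem_Ico (hh : IsHalleyMajorant h h' h'' R tstar) (hτ : τ ∈ Icc 0 tstar) : τ ∈ Ico 0 R :=
  ⟨hτ.1, hτ.2.trans_lt hh.tstar_mem.2⟩

theorem deriv_two_nonneg (hh : IsHalleyMajorant h h' h'' R tstar) (hτ : τ ∈ Ico 0 R) :
    0 ≤ h'' τ :=
  hh.deriv_two_zero_nonneg.trans (hh.monotoneOn ⟨le_rfl, hτ.1.trans_lt hτ.2⟩ hτ hτ.1)

theorem monotoneOn_deriv (hh : IsHalleyMajorant h h' h'' R tstar) : MonotoneOn h' (Ico 0 R) :=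
  monotoneOn_of_hasDerivWithinAt_nonneg (convex_Ico 0 R)
    (fun s hs => (hh.hasDerivWithinAt' s hs).continuousWithinAt)
    (fun s hs => (hh.hasDerivWithinAt' s (interior_subset hs)).mono interior_subset)
    (fun _ hs => hh.deriv_two_nonneg (interior_subset hs))

theorem deriv_neg (hh : IsHalleyMajorant h h' h'' R tstar) (hτ : τ ∈ Icc 0 tstar) : h' τ < 0 :=
  (hh.monotoneOn_deriv (hh.mem_Ico hτ) hh.tstar_mem hτ.2).trans_lt hh.deriv_tstar_neg

theorem neg_one_div_deriv_le (hh : IsHalleyMajorant h h' h'' R tstar) {r : ℝ} (hr : 0 ≤ r)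
    (hrτ : r ≤ τ) (hτ : τ ∈ Icc 0 tstar) : -1 / h' r ≤ -1 / h' τ := by
  have hmono : h' r ≤ h' τ :=
    hh.monotoneOn_deriv (hh.mem_Ico ⟨hr, hrτ.trans hτ.2⟩) (hh.mem_Ico hτ) hrτ
  rw [neg_div, neg_div, neg_le_neg_iff]
  exact one_div_le_one_div_of_neg_of_le (hh.deriv_neg hτ) hmono

theorem nonneg (hh : IsHalleyMajorant h h' h'' R tstar) (hτ : τ ∈ Icc 0 tstar) : 0 ≤ h τ := by
  have hsub : Icc 0 tstar ⊆ Ico 0 R := fun _ => hh.mem_Ico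
  have hderiv (s : ℝ) (hs : s ∈ Icc 0 tstar) : HasDerivWithinAt h (h' s) (Icc 0 tstar) s :=
    (hh.hasDerivWithinAt s (hsub hs)).mono hsub
  have hanti : AntitoneOn h (Icc 0 tstar) :=
    antitoneOn_of_hasDerivWithinAt_nonpos (convex_Icc 0 tstar)
      (fun s hs => (hderiv s hs).continuousWithinAt)
      (fun s hs => (hderiv s (interior_subset hs)).mono interior_subset)
      (fun s hs => (hh.deriv_neg (interior_subset hs)).le)
  exact hh.apply_tstar ▸ hanti hτ ⟨hh.tstar_mem.1, le_rfl⟩ hτ.2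

theorem quadratic_tstar_nonpos (hh : IsHalleyMajorant h h' h'' R tstar) (hτ : τ ∈ Icc 0 tstar) :
    h τ + h' τ * (tstar - τ) + h'' τ / 2 * (tstar - τ) ^ 2 ≤ 0 := by
  have hsub : Icc τ tstar ⊆ Ico 0 R := fun u hu => hh.mem_Ico ⟨hτ.1.trans hu.1, hu.2⟩
  have hremainder := norm_taylor_two_le (f := fun _ => (0 : ℝ)) (f' := fun _ => 0)
    (f'' := fun _ => 0) (fun u _ => hasDerivWithinAt_const u _ 0)
    (fun u _ => hasDerivWithinAt_const u _ 0)
    (fun u hu => (hh.hasDerivWithinAt u (hsub hu)).mono hsub)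
    (fun u hu => (hh.hasDerivWithinAt' u (hsub hu)).mono hsub)
    (fun u hu => by
      simpa using hh.monotoneOn (hsub ⟨le_rfl, hτ.2⟩) (hsub hu) hu.1)
    (u := tstar) ⟨hτ.2, le_rfl⟩
  simp only [sub_self, smul_zero, norm_zero, hh.apply_tstar] at hremainder
  linarith

theorem halleyAux_lt_one (hh : IsHalleyMajorant h h' h'' R tstar) (hτ : τ ∈ Icc 0 tstar) :
    halleyAux (h τ) (h' τ) (h'' τ) < 1 :=
  _root_.halleyAux_lt_one (hh.deriv_neg hτ) (hh.deriv_two_nonneg (hh.mem_Ico hτ))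
    (hh.quadratic_tstar_nonpos hτ)

theorem halleyIncr_nonneg (hh : IsHalleyMajorant h h' h'' R tstar) (hτ : τ ∈ Icc 0 tstar) :
    0 ≤ halleyIncr (h τ) (h' τ) (h'' τ) :=
  _root_.halleyIncr_nonneg (hh.nonneg hτ) (hh.deriv_neg hτ) (hh.halleyAux_lt_one hτ)

theorem add_halleyIncr_mem_Icc (hh : IsHalleyMajorant h h' h'' R tstar) (hτ : τ ∈ Icc 0 tstar) :
    τ + halleyIncr (h τ) (h' τ) (h'' τ) ∈ Icc 0 tstar := by
  refine ⟨add_nonneg hτ.1 (hh.halleyIncr_nonneg hτ), ?_⟩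
  linarith [halleyIncr_le (hh.deriv_neg hτ) (hh.deriv_two_nonneg (hh.mem_Ico hτ))
    (sub_nonneg.2 hτ.2) (hh.quadratic_tstar_nonpos hτ)]

theorem seq_mem_Icc (hh : IsHalleyMajorant h h' h'' R tstar) {t : ℕ → ℝ} (ht0 : t 0 = 0)
    (ht : ∀ k, t (k + 1) = t k + halleyIncr (h (t k)) (h' (t k)) (h'' (t k))) (k : ℕ) :
    t k ∈ Icc 0 tstar := by
  induction k with
  | zero => rw [ht0]; exact ⟨le_rfl, hh.tstar_mem.1⟩
  | succ k ih => exact ht k ▸ hh.add_halleyIncr_mem_Icc ih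

end IsHalleyMajorant

end Majorants

namespace IsMajorizedAt

section Taylor

variable {X Y : Type*} [NormedAddCommGroup X] [NormedSpace ℝ X] [NormedAddCommGroup Y]
  [NormedSpace ℝ Y] {G : X → Y} {G' : X → X →L[ℝ] Y} {G'' : X → X →L[ℝ] X →L[ℝ] Y} {x₀ x d : X}
  {h h' h'' : ℝ → ℝ} {R τ s : ℝ}

theorem norm_deriv_two_add_sub_le (hG : IsMajorizedAt G G' G'' x₀ R h h'')
    (hh : IsConvexMajorant h h' h'' R) (hx : ‖x - x₀‖ ≤ τ) (hd : ‖d‖ ≤ s) (hR : τ + s < R) :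
    ‖G'' (x + d) - G'' x‖ ≤ h'' (τ + s) - h'' τ := by
  have hr0 := norm_nonneg (x - x₀)
  have hd0 := norm_nonneg d
  have hxd : ‖x + d - x₀‖ ≤ ‖x - x₀‖ + ‖d‖ := by
    rw [add_sub_right_comm]
    exact norm_add_le _ _
  have hmem : τ + ‖d‖ ∈ Ico 0 R := ⟨by linarith, by linarith⟩
  calc ‖G'' (x + d) - G'' x‖
      ≤ h'' (‖x - x₀‖ + ‖d‖) - h'' ‖x - x₀‖ := by
        simpa only [add_sub_cancel_left, add_comm ‖d‖] using
          hG.norm_deriv_two_sub_le x (mem_ball_iff_norm.2 (by linarith)) (x + d)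
            (mem_ball_iff_norm.2 (by linarith)) (by rw [add_sub_cancel_left]; linarith)
    _ ≤ h'' (τ + ‖d‖) - h'' τ :=
        map_add_sub_map_le_of_convexOn hh.convexOn ⟨hr0, by linarith⟩ hmem hx hd0
    _ ≤ h'' (τ + s) - h'' τ :=
        sub_le_sub_right (hh.monotoneOn hmem ⟨by linarith, hR⟩ (by linarith)) _

theorem norm_deriv_two_le_of_norm_sub_le (hG : IsMajorizedAt G G' G'' x₀ R h h'')
    (hh : IsConvexMajorant h h' h'' R) (hx : ‖x - x₀‖ ≤ τ) (hτ : τ < R) : ‖G'' x‖ ≤ h'' τ := by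
  have hincr : ‖G'' x - G'' x₀‖ ≤ h'' τ - h'' 0 := by
    simpa using hG.norm_deriv_two_add_sub_le hh (x := x₀) (τ := 0) (by simp) hx (by simpa)
  linarith [norm_le_norm_add_norm_sub' (G'' x) (G'' x₀), hG.norm_deriv_two_le]

theorem norm_deriv_sub_le (hG : IsMajorizedAt G G' G'' x₀ R h h'')
    (hh : IsConvexMajorant h h' h'' R) (hx : x ∈ ball x₀ R) :
    ‖G' x - G' x₀‖ ≤ h' ‖x - x₀‖ - h' 0 := by
  have hr : ‖x - x₀‖ < R := mem_ball_iff_norm.1 hx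
  have hsmul {u : ℝ} (hu : u ∈ Icc (0 : ℝ) 1) : ‖u • (x - x₀)‖ = u * ‖x - x₀‖ := by
    rw [norm_smul, Real.norm_of_nonneg hu.1]
  have hmem {u : ℝ} (hu : u ∈ Icc (0 : ℝ) 1) : 0 + u * ‖x - x₀‖ ∈ Ico 0 R :=
    add_mul_mem_Ico le_rfl (norm_nonneg _) (by rwa [zero_add]) hu
  have hball {u : ℝ} (hu : u ∈ Icc (0 : ℝ) 1) : x₀ + u • (x - x₀) ∈ ball x₀ R := by
    rw [mem_ball_iff_norm, add_sub_cancel_left, hsmul hu, ← zero_add (_ * _)]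
    exact (hmem hu).2
  have hcompare := norm_sub_le_sub_of_norm_deriv_le
    (fun u hu => (hasDerivAt_comp_add_smul (hG.hasFDerivAt' _ (hball hu))).hasDerivWithinAt)
    (fun u hu => hasDerivWithinAt_comp_add_mul le_rfl (norm_nonneg _) (by rwa [zero_add])
      (hh.hasDerivWithinAt' _ (hmem hu)))
    (fun u hu => by
      have hu := Ico_subset_Icc_self hu
      refine ContinuousLinearMap.le_of_opNorm_le _
        (hG.norm_deriv_two_le_of_norm_sub_le hh ?_ (hmem hu).2) _
      rw [add_sub_cancel_left, hsmul hu, zero_add])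
    (u := 1) ⟨zero_le_one, le_rfl⟩
  simpa using hcompare

theorem norm_taylor_le (hG : IsMajorizedAt G G' G'' x₀ R h h'')
    (hh : IsConvexMajorant h h' h'' R) (hx : ‖x - x₀‖ ≤ τ) (hd : ‖d‖ ≤ s) (hR : τ + s < R) :
    ‖G (x + d) - G x - G' x d - (2⁻¹ : ℝ) • G'' x d d‖ ≤
      h (τ + s) - h τ - h' τ * s - h'' τ / 2 * s ^ 2 := by
  have hτ : 0 ≤ τ := (norm_nonneg _).trans hx
  have hs : 0 ≤ s := (norm_nonneg _).trans hd
  have hmem {u : ℝ} (hu : u ∈ Icc (0 : ℝ) 1) : τ + u * s ∈ Ico 0 R := add_mul_mem_Ico hτ hs hR hu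
  have hsmul {u : ℝ} (hu : u ∈ Icc (0 : ℝ) 1) : ‖u • d‖ ≤ u * s := by
    rw [norm_smul, Real.norm_of_nonneg hu.1]
    exact mul_le_mul_of_nonneg_left hd hu.1
  have hball {u : ℝ} (hu : u ∈ Icc (0 : ℝ) 1) : x + u • d ∈ ball x₀ R := by
    rw [mem_ball_iff_norm, add_sub_right_comm]
    exact (norm_add_le_of_le hx (hsmul hu)).trans_lt (hmem hu).2
  have htaylor := norm_taylor_two_le
    (fun u hu => (hasDerivAt_comp_add_smul (hG.hasFDerivAt _ (hball hu))).hasDerivWithinAt)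
    (fun u hu => by
      simpa using ((hasDerivAt_comp_add_smul (hG.hasFDerivAt' _ (hball hu))).clm_apply
        (hasDerivAt_const u d)).hasDerivWithinAt)
    (fun u hu => hasDerivWithinAt_comp_add_mul hτ hs hR (hh.hasDerivWithinAt _ (hmem hu)))
    (fun u hu => (hasDerivWithinAt_comp_add_mul hτ hs hR
      (hh.hasDerivWithinAt' _ (hmem hu))).mul_const s)
    (fun u hu => by
      simpa [sub_mul] using (G'' (x + u • d) - G'' x).le_of_opNorm₂_le_of_le
        (hG.norm_deriv_two_add_sub_le hh hx (hsmul hu) (hmem hu).2) hd hd)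
    (u := 1) ⟨zero_le_one, le_rfl⟩
  simp only [one_smul, zero_smul, add_zero, one_mul, zero_mul, sub_zero, one_pow, one_div]
    at htaylor
  linarith

end Taylor

section Halley

variable {X : Type*} [NormedAddCommGroup X] [NormedSpace ℝ X] {G : X → X} {G' : X → X →L[ℝ] X}
  {G'' : X → X →L[ℝ] X →L[ℝ] X} {x₀ x : X} {h h' h'' : ℝ → ℝ} {R tstar τ : ℝ}

theorem norm_id_sub_deriv_le (hG : IsMajorizedAt G G' G'' x₀ R h h'')
    (hh : IsHalleyMajorant h h' h'' R tstar) (hG' : G' x₀ = .id ℝ X) (hx : x ∈ ball x₀ R) :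
    ‖.id ℝ X - G' x‖ ≤ h' ‖x - x₀‖ + 1 := by
  simpa [norm_sub_rev, hG', hh.deriv_zero] using hG.norm_deriv_sub_le hh.toIsConvexMajorant hx

variable [CompleteSpace X]

theorem isInvertible_deriv (hG : IsMajorizedAt G G' G'' x₀ R h h'')
    (hh : IsHalleyMajorant h h' h'' R tstar) (hG' : G' x₀ = .id ℝ X) (hx : ‖x - x₀‖ ≤ tstar) :
    (G' x).IsInvertible :=
  isInvertible_of_norm_id_sub_lt_one <|
    (hG.norm_id_sub_deriv_le hh hG'
      (mem_ball_iff_norm.2 (hx.trans_lt hh.tstar_mem.2))).trans_lt <| by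
    linarith [hh.deriv_neg ⟨norm_nonneg (x - x₀), hx⟩]

theorem norm_inverse_deriv_le (hG : IsMajorizedAt G G' G'' x₀ R h h'')
    (hh : IsHalleyMajorant h h' h'' R tstar) (hG' : G' x₀ = .id ℝ X) (hx : ‖x - x₀‖ ≤ tstar) :
    ‖(G' x).inverse‖ ≤ -1 / h' ‖x - x₀‖ := by
  have hneg := hh.deriv_neg ⟨norm_nonneg (x - x₀), hx⟩
  calc ‖(G' x).inverse‖ ≤ 1 / (1 - (h' ‖x - x₀‖ + 1)) :=
        norm_inverse_le_of_norm_id_sub_le (by linarith)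
          (hG.norm_id_sub_deriv_le hh hG' (mem_ball_iff_norm.2 (hx.trans_lt hh.tstar_mem.2)))
    _ = -1 / h' ‖x - x₀‖ := by
        rw [sub_add_cancel_right, div_neg, neg_div]

theorem norm_inverse_deriv_le_of_le (hG : IsMajorizedAt G G' G'' x₀ R h h'')
    (hh : IsHalleyMajorant h h' h'' R tstar) (hG' : G' x₀ = .id ℝ X) (hτ : τ ∈ Icc 0 tstar)
    (hx : ‖x - x₀‖ ≤ τ) : ‖(G' x).inverse‖ ≤ -1 / h' τ :=
  (hG.norm_inverse_deriv_le hh hG' (hx.trans hτ.2)).trans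
    (hh.neg_one_div_deriv_le (norm_nonneg _) hx hτ)

theorem norm_halleyCorrection_le (hG : IsMajorizedAt G G' G'' x₀ R h h'')
    (hh : IsHalleyMajorant h h' h'' R tstar) (hG' : G' x₀ = .id ℝ X) (hτ : τ ∈ Icc 0 tstar)
    (hx : ‖x - x₀‖ ≤ τ) (hGx : ‖G x‖ ≤ h τ) :
    ‖halleyCorrection (G' x) (G'' x) (G x)‖ ≤ halleyIncr (h τ) (h' τ) (h'' τ) :=
  _root_.norm_halleyCorrection_le (hG.norm_inverse_deriv_le_of_le hh hG' hτ hx)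
    (hG.norm_deriv_two_le_of_norm_sub_le hh.toIsConvexMajorant hx (hh.mem_Ico hτ).2) hGx
    (hh.halleyAux_lt_one hτ)

theorem exists_equiv_halleyMap (hG : IsMajorizedAt G G' G'' x₀ R h h'')
    (hh : IsHalleyMajorant h h' h'' R tstar) (hG' : G' x₀ = .id ℝ X) (hτ : τ ∈ Icc 0 tstar)
    (hx : ‖x - x₀‖ ≤ τ) (hGx : ‖G x‖ ≤ h τ) :
    ∃ e : X ≃L[ℝ] X, (e : X →L[ℝ] X) = G' x ∧ ∃ m : X ≃L[ℝ] X,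
      (m : X →L[ℝ] X) = .id ℝ X - (2⁻¹ : ℝ) • (e.symm : X →L[ℝ] X) ∘L G'' x (e.symm (G x)) ∧
      halleyMap G G' G'' x = x - m.symm (e.symm (G x)) ∧
      ‖(e.symm : X →L[ℝ] X)‖ ≤ -1 / h' ‖x - x₀‖ ∧
      ‖(m.symm : X →L[ℝ] X)‖ ≤ 1 / (1 - halleyAux (h τ) (h' τ) (h'' τ)) ∧
      ‖halleyMap G G' G'' x - x‖ ≤ halleyIncr (h τ) (h' τ) (h'' τ) := by
  have hinv := hG.norm_inverse_deriv_le_of_le hh hG' hτ hx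
  have hG'' := hG.norm_deriv_two_le_of_norm_sub_le hh.toIsConvexMajorant hx (hh.mem_Ico hτ).2
  have hL := hh.halleyAux_lt_one hτ
  obtain ⟨e, he⟩ := hG.isInvertible_deriv hh hG' (hx.trans hτ.2)
  obtain ⟨m, hm⟩ := isInvertible_id_sub_halleyOperator hinv hG'' hGx hL
  have hes : (e.symm : X →L[ℝ] X) = (G' x).inverse := by
    rw [← he, ContinuousLinearMap.inverse_equiv]
  have hms : (m.symm : X →L[ℝ] X) = (.id ℝ X - halleyOperator (G' x) (G'' x) (G x)).inverse := by
    rw [← hm, ContinuousLinearMap.inverse_equiv]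
  have hes_apply : e.symm (G x) = (G' x).inverse (G x) := congr($hes (G x))
  refine ⟨e, he, m, ?_, ?_, ?_, ?_, ?_⟩
  · rw [hm, halleyOperator, hes, hes_apply]
  · rw [halleyMap, halleyCorrection, ← sub_eq_add_neg, ← hms, hes_apply]
    rfl
  · exact hes ▸ hG.norm_inverse_deriv_le hh hG' (hx.trans hτ.2)
  · exact hms ▸ norm_inverse_id_sub_halleyOperator_le hinv hG'' hGx hL
  · rw [halleyMap, add_sub_cancel_left]
    exact hG.norm_halleyCorrection_le hh hG' hτ hx hGx

theorem norm_apply_halleyMap_le (hG : IsMajorizedAt G G' G'' x₀ R h h'')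
    (hh : IsHalleyMajorant h h' h'' R tstar) (hG' : G' x₀ = .id ℝ X) (hτ : τ ∈ Icc 0 tstar)
    (hx : ‖x - x₀‖ ≤ τ) (hGx : ‖G x‖ ≤ h τ) :
    ‖G (halleyMap G G' G'' x)‖ ≤ h (τ + halleyIncr (h τ) (h' τ) (h'' τ)) := by
  have hquadratic := norm_quadratic_halleyCorrection_le
    (hG.isInvertible_deriv hh hG' (hx.trans hτ.2)) (hh.deriv_neg hτ).ne
    (hG.norm_inverse_deriv_le_of_le hh hG' hτ hx)
    (hG.norm_deriv_two_le_of_norm_sub_le hh.toIsConvexMajorant hx (hh.mem_Ico hτ).2) hGx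
    (hh.halleyAux_lt_one hτ)
  have hremainder := hG.norm_taylor_le hh.toIsConvexMajorant hx
    (hG.norm_halleyCorrection_le hh hG' hτ hx hGx) (hh.mem_Ico (hh.add_halleyIncr_mem_Icc hτ)).2
  rw [halleyMap]
  set d := halleyCorrection (G' x) (G'' x) (G x)
  set s := halleyIncr (h τ) (h' τ) (h'' τ)
  calc ‖G (x + d)‖
      = ‖(G (x + d) - G x - G' x d - (2⁻¹ : ℝ) • G'' x d d) +
          (G x + G' x d + (2⁻¹ : ℝ) • G'' x d d)‖ := by congr 1; abel
    _ ≤ (h (τ + s) - h τ - h' τ * s - h'' τ / 2 * s ^ 2) +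
          (h τ + h' τ * s + h'' τ / 2 * s ^ 2) := norm_add_le_of_le hremainder hquadratic
    _ = h (τ + s) := by ring

variable {t : ℕ → ℝ}

theorem norm_iterate_halleyMap_le (hG : IsMajorizedAt G G' G'' x₀ R h h'')
    (hh : IsHalleyMajorant h h' h'' R tstar) (hG' : G' x₀ = .id ℝ X) (ht0 : t 0 = 0)
    (ht : ∀ k, t (k + 1) = t k + halleyIncr (h (t k)) (h' (t k)) (h'' (t k))) (k : ℕ) :
    ‖(halleyMap G G' G'')^[k] x₀ - x₀‖ ≤ t k ∧
      ‖G ((halleyMap G G' G'')^[k] x₀)‖ ≤ h (t k) := by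
  induction k with
  | zero => simpa [ht0] using hG.norm_le
  | succ k ih =>
    obtain ⟨hx, hGx⟩ := ih
    have hτ := hh.seq_mem_Icc ht0 ht k
    rw [Function.iterate_succ_apply', ht]
    refine ⟨?_, hG.norm_apply_halleyMap_le hh hG' hτ hx hGx⟩
    rw [halleyMap, add_sub_right_comm]
    exact norm_add_le_of_le hx (hG.norm_halleyCorrection_le hh hG' hτ hx hGx)

end Halley

end IsMajorizedAt

theorem halley_method_auxiliary_estimates_general
    {X Y : Type*} [NormedAddCommGroup X] [NormedSpace ℝ X] [CompleteSpace X]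
    [NormedAddCommGroup Y] [NormedSpace ℝ Y]
    {F : X → Y} {F' : X → X →L[ℝ] Y} {F'' : X → X →L[ℝ] X →L[ℝ] Y}
    {x₀ : X} {e0 : X ≃L[ℝ] Y} (he0 : (e0 : X →L[ℝ] Y) = F' x₀)
    {R tstar : ℝ} {h h' h'' : ℝ → ℝ} (hh : IsHalleyMajorant h h' h'' R tstar)
    (hF : IsMajorizedAt (fun x => e0.symm (F x)) (fun x => (e0.symm : Y →L[ℝ] X).comp (F' x))
      (fun x => (ContinuousLinearMap.compL ℝ X Y X (e0.symm : Y →L[ℝ] X)).comp (F'' x))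
      x₀ R h h'')
    {t : ℕ → ℝ} (ht0 : t 0 = 0)
    (ht : ∀ k, t (k + 1) = t k + halleyIncr (h (t k)) (h' (t k)) (h'' (t k))) :
    ∃ (x : ℕ → X) (e : ℕ → (X ≃L[ℝ] Y)) (m : ℕ → (X ≃L[ℝ] X)),
      x 0 = x₀ ∧
      ∀ k,
        ((e k : X →L[ℝ] Y) = F' (x k)) ∧
        ((m k : X →L[ℝ] X) = ContinuousLinearMap.id ℝ X -
          (2⁻¹ : ℝ) • (((e k).symm : Y →L[ℝ] X).comp
            ((F'' (x k)) ((e k).symm (F (x k)))))) ∧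
        (x (k + 1) = x k - (m k).symm ((e k).symm (F (x k)))) ∧
        (‖((e k).symm : Y →L[ℝ] X).comp (F' x₀)‖ ≤ -1 / h' ‖x k - x₀‖ ∧
          -1 / h' ‖x k - x₀‖ ≤ -1 / h' (t k)) ∧
        (‖(ContinuousLinearMap.compL ℝ X Y X (e0.symm : Y →L[ℝ] X)).comp
            (F'' (x k))‖ ≤ h'' (t k)) ∧
        (‖(e0.symm : Y →L[ℝ] X) (F (x k))‖ ≤ h (t k)) ∧
        (‖((m k).symm : X →L[ℝ] X)‖ ≤ 1 / (1 - halleyAux (h (t k)) (h' (t k)) (h'' (t k)))) ∧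
        (‖x (k + 1) - x k‖ ≤ t (k + 1) - t k) := by
  have hid : (e0.symm : Y →L[ℝ] X).comp (F' x₀) = .id ℝ X := by
    rw [← he0, ContinuousLinearEquiv.coe_symm_comp_coe]
  set G : X → X := fun x => e0.symm (F x)
  set G' : X → X →L[ℝ] X := fun x => (e0.symm : Y →L[ℝ] X).comp (F' x)
  set G'' := fun x => (ContinuousLinearMap.compL ℝ X Y X (e0.symm : Y →L[ℝ] X)).comp (F'' x)
  set x : ℕ → X := fun k => (halleyMap G G' G'')^[k] x₀
  have hsucc (k : ℕ) : x (k + 1) = halleyMap G G' G'' (x k) := Function.iterate_succ_apply' _ _ _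
  have htmem (k : ℕ) : t k ∈ Icc 0 tstar := hh.seq_mem_Icc ht0 ht k
  have hx (k : ℕ) : ‖x k - x₀‖ ≤ t k ∧ ‖G (x k)‖ ≤ h (t k) :=
    hF.norm_iterate_halleyMap_le hh hid ht0 ht k
  choose e he m hm hstep he_le hm_le hstep_le using fun k =>
    hF.exists_equiv_halleyMap hh hid (htmem k) (hx k).1 (hx k).2
  have heF' (k : ℕ) : ((e k).trans e0 : X →L[ℝ] Y) = F' (x k) := by
    ext v
    simpa [G'] using congr(e0 ($(he k) v))
  have he_comp (k : ℕ) : (((e k).trans e0).symm : Y →L[ℝ] X).comp (F' x₀) = (e k).symm := by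
    rw [← he0]
    ext v
    simp
  exact ⟨x, fun k => (e k).trans e0, m, rfl, fun k => ⟨heF' k, hm k, (hsucc k).trans (hstep k),
    ⟨he_comp k ▸ he_le k, hh.neg_one_div_deriv_le (norm_nonneg _) (hx k).1 (htmem k)⟩,
    hF.norm_deriv_two_le_of_norm_sub_le hh.toIsConvexMajorant (hx k).1 (hh.mem_Ico (htmem k)).2,
    (hx k).2, hm_le k, by rw [hsucc, ht, add_sub_cancel_left]; exact hstep_le k⟩⟩

/-- if `h` is a majorizing function to `F` at `x₀` satisfying
(A1)-(A3), and `(t_k)` is the majorizing sequence, then the Halley sequence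
`x_{k+1} = x_k - [I - L_F(x_k)]⁻¹ F'(x_k)⁻¹ F(x_k)` with
`L_F(x) = ½ F'(x)⁻¹F''(x)F'(x)⁻¹F(x)` starting at `x₀` is well defined (the
invertibility of `F'(x_k)` and of `I - L_F(x_k)` being witnessed by continuous
linear equivalences `e k` and `m k`) and satisfies, for all `k`:
(i) `‖F'(x_k)⁻¹F'(x₀)‖ ≤ -1/h'(‖x_k - x₀‖) ≤ -1/h'(t_k)`;
(ii) `‖F'(x₀)⁻¹F''(x_k)‖ ≤ h''(t_k)`; (iii) `‖F'(x₀)⁻¹F(x_k)‖ ≤ h(t_k)`;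
(iv) `‖[I - L_F(x_k)]⁻¹‖ ≤ 1/(1 - L_h(t_k))`; (v) `‖x_{k+1} - x_k‖ ≤ t_{k+1} - t_k`. -/
theorem halley_method_auxiliary_estimates
    {X Y : Type*} [NormedAddCommGroup X] [NormedSpace ℝ X] [CompleteSpace X]
    [NormedAddCommGroup Y] [NormedSpace ℝ Y] [CompleteSpace Y]
    (D : Set X) (hD : IsOpen D) (hDconv : Convex ℝ D)
    (F : X → Y) (F' : X → X →L[ℝ] Y) (F'' : X → X →L[ℝ] X →L[ℝ] Y)
    (hdF : ∀ x ∈ D, HasFDerivAt F (F' x) x)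
    (hdF' : ∀ x ∈ D, HasFDerivAt F' (F'' x) x)
    (hcF'' : ContinuousOn F'' D)
    (x₀ : X) (hx₀ : x₀ ∈ D)
    (e0 : X ≃L[ℝ] Y) (he0 : (e0 : X →L[ℝ] Y) = F' x₀)
    (R : ℝ) (hR : 0 < R) (hballD : ball x₀ R ⊆ D)
    (h h1 h2 : ℝ → ℝ)
    (hd1 : ∀ s ∈ Ico (0:ℝ) R, HasDerivWithinAt h (h1 s) (Ico 0 R) s)
    (hd2 : ∀ s ∈ Ico (0:ℝ) R, HasDerivWithinAt h1 (h2 s) (Ico 0 R) s)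
    (hc2 : ContinuousOn h2 (Ico 0 R))
    (hA1a : 0 < h 0) (hA1b : 0 < h2 0) (hA1c : h1 0 = -1)
    (hA2a : ConvexOn ℝ (Ico 0 R) h2) (hA2b : StrictMonoOn h2 (Ico 0 R))
    (tstar : ℝ) (htsmem : tstar ∈ Ioo 0 R) (htszero : h tstar = 0)
    (htsmin : ∀ s ∈ Ioo (0:ℝ) R, h s = 0 → tstar ≤ s) (htsder : h1 tstar < 0)
    (hmaj : ∀ x ∈ ball x₀ R, ∀ y ∈ ball x₀ R, ‖y - x‖ + ‖x - x₀‖ < R →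
      ‖(ContinuousLinearMap.compL ℝ X Y X (e0.symm : Y →L[ℝ] X)).comp
          (F'' y - F'' x)‖ ≤ h2 (‖y - x‖ + ‖x - x₀‖) - h2 ‖x - x₀‖)
    (hinit1 : ‖(e0.symm : Y →L[ℝ] X) (F x₀)‖ ≤ h 0)
    (hinit2 : ‖(ContinuousLinearMap.compL ℝ X Y X (e0.symm : Y →L[ℝ] X)).comp
        (F'' x₀)‖ ≤ h2 0)
    (t : ℕ → ℝ) (ht0 : t 0 = 0)
    (hrec : ∀ k, t (k + 1) =
      t k - (1 / (1 - h (t k) * h2 (t k) / (2 * (h1 (t k)) ^ 2))) * (h (t k) / h1 (t k))) :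
    ∃ (x : ℕ → X) (e : ℕ → (X ≃L[ℝ] Y)) (m : ℕ → (X ≃L[ℝ] X)),
      x 0 = x₀ ∧
      ∀ k,
        ((e k : X →L[ℝ] Y) = F' (x k)) ∧
        ((m k : X →L[ℝ] X) = ContinuousLinearMap.id ℝ X -
          (2⁻¹ : ℝ) • (((e k).symm : Y →L[ℝ] X).comp
            ((F'' (x k)) ((e k).symm (F (x k)))))) ∧
        (x (k + 1) = x k - (m k).symm ((e k).symm (F (x k)))) ∧
        (‖((e k).symm : Y →L[ℝ] X).comp (F' x₀)‖ ≤ -1 / h1 ‖x k - x₀‖ ∧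
          -1 / h1 ‖x k - x₀‖ ≤ -1 / h1 (t k)) ∧
        (‖(ContinuousLinearMap.compL ℝ X Y X (e0.symm : Y →L[ℝ] X)).comp
            (F'' (x k))‖ ≤ h2 (t k)) ∧
        (‖(e0.symm : Y →L[ℝ] X) (F (x k))‖ ≤ h (t k)) ∧
        (‖((m k).symm : X →L[ℝ] X)‖ ≤
          1 / (1 - h (t k) * h2 (t k) / (2 * (h1 (t k)) ^ 2))) ∧
        (‖x (k + 1) - x k‖ ≤ t (k + 1) - t k) :=
  halley_method_auxiliary_estimates_general he0
    { hasDerivWithinAt := hd1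
      hasDerivWithinAt' := hd2
      convexOn := hA2a
      monotoneOn := hA2b.monotoneOn
      deriv_zero := hA1c
      deriv_two_zero_nonneg := hA1b.le
      tstar_mem := Ioo_subset_Ico_self htsmem
      apply_tstar := htszero
      deriv_tstar_neg := htsder }
    { hasFDerivAt := fun x hx => (e0.symm : Y →L[ℝ] X).hasFDerivAt.comp x (hdF x (hballD hx))
      hasFDerivAt' := fun x hx =>
        (ContinuousLinearMap.compL ℝ X Y X (e0.symm : Y →L[ℝ] X)).hasFDerivAt.comp x
          (hdF' x (hballD hx))
      norm_le := hinit1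
      norm_deriv_two_le := hinit2
      norm_deriv_two_sub_le := by simpa only [ContinuousLinearMap.comp_sub] using hmaj }
    ht0 hrec
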